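/- Let N ≥ 1 be an integer, R > 0, let a : [0,R] → ℝ be continuous and ψ : [0,R] → ℝ be continuous, nonnegative, and strictly positive on (0,R), and write w(r) = e^{a(r)}ψ(r)^{N−1}. Let λ > 0, m > 1, and let u : [0,R] → ℝ be continuously differentiable with u ≥ 0 and u'(r) ≤ 0 for all r, and assume that for every r ∈ (0,R), e^{a(r)}ψ(r)^{N−1}u'(r) = −λ∫₀^r w(s)(1+u(s))^m ds. Then for every p > 1 and every r ∈ (0,R): u(0) ≥ u(r), and there exists c ∈ (0,r) such that u(0) − u(r) ≤ λ r e^{−a(c)}ψ(c)^{1−N} (∫₀^R w(s)(1+u(s))^{mp} ds)^{1/p} (∫₀^R w(s) ds)^{(p−1)/p}. -/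

import Mathlib

open MeasureTheory Real intervalIntegral

theorem memLp_aux {h : ℝ → ℝ} {R : ℝ} (hh : ContinuousOn h (Set.Icc 0 R)) (P : ENNReal) :
    MemLp h P (volume.restrict (Set.Ioc 0 R)) := by
  obtain ⟨C, hC⟩ := isCompact_Icc.exists_bound_of_continuousOn hh
  refine MemLp.of_bound ((hh.mono Set.Ioc_subset_Icc_self).aestronglyMeasurable measurableSet_Ioc) C ?_
  filter_upwards [ae_restrict_mem measurableSet_Ioc] with x hx
  exact hC x (Set.Ioc_subset_Icc_self hx)

theorem radial_power_oscillation_bound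
    (N : ℕ) (hN : 1 ≤ N) (R : ℝ) (hR : 0 < R)
    (a ψ : ℝ → ℝ) (ha : ContinuousOn a (Set.Icc 0 R))
    (hψ : ContinuousOn ψ (Set.Icc 0 R)) (hψ0 : ∀ r ∈ Set.Icc (0:ℝ) R, 0 ≤ ψ r)
    (hψpos : ∀ r ∈ Set.Ioo (0:ℝ) R, 0 < ψ r)
    (w : ℝ → ℝ) (hw : ∀ r, w r = exp (a r) * ψ r ^ (N - 1))
    (lam m : ℝ) (hlam : 0 < lam) (hm : 1 < m)
    (u : ℝ → ℝ) (hu : ContDiff ℝ 1 u)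
    (hu0 : ∀ r ∈ Set.Icc (0:ℝ) R, 0 ≤ u r)
    (hu' : ∀ r ∈ Set.Icc (0:ℝ) R, deriv u r ≤ 0)
    (heq : ∀ r ∈ Set.Ioo (0:ℝ) R,
      exp (a r) * ψ r ^ (N - 1) * deriv u r =
        -lam * ∫ s in (0:ℝ)..r, w s * (1 + u s) ^ m) :
    ∀ p : ℝ, 1 < p → ∀ r ∈ Set.Ioo (0:ℝ) R,
      u r ≤ u 0 ∧ ∃ c ∈ Set.Ioo (0:ℝ) r,
        u 0 - u r ≤ lam * r * exp (-(a c)) * ψ c ^ ((1:ℤ) - (N:ℤ)) *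
          (∫ s in (0:ℝ)..R, w s * (1 + u s) ^ (m*p)) ^ (1/p) *
          (∫ s in (0:ℝ)..R, w s) ^ ((p-1)/p) := by
  intro p hp r hr
  have hp0 : 0 < p := by linarith
  have hdiff : Differentiable ℝ u := hu.differentiable (by norm_num)
  obtain ⟨c, hc, hcd⟩ := exists_deriv_eq_slope u hr.1 hu.continuous.continuousOn
    hdiff.differentiableOn
  have hcR : c ∈ Set.Ioo (0:ℝ) R := ⟨hc.1, hc.2.trans hr.2⟩
  have hslope : u 0 - u r = -(r * deriv u c) := by
    rw [hcd]; have := hr.1.ne'; field_simp; ring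
  have hle : deriv u c ≤ 0 := hu' c ⟨hcR.1.le, hcR.2.le⟩
  refine ⟨by nlinarith [hr.1], c, hc, ?_⟩
  have hwc : ContinuousOn w (Set.Icc 0 R) := by
    rw [show w = fun r => exp (a r) * ψ r ^ (N - 1) from funext hw]
    exact (Real.continuous_exp.comp_continuousOn ha).mul (hψ.pow _)
  have hw0 : ∀ s ∈ Set.Icc (0:ℝ) R, 0 ≤ w s := by
    intro s hs; rw [hw]; exact mul_nonneg (exp_pos _).le (pow_nonneg (hψ0 s hs) _)
  have h1u : ∀ s ∈ Set.Icc (0:ℝ) R, 0 < 1 + u s := fun s hs => by linarith [hu0 s hs]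
  have hupow : ∀ k : ℝ, ContinuousOn (fun s => (1 + u s) ^ k) (Set.Icc 0 R) := fun k =>
    ContinuousOn.rpow_const (continuousOn_const.add hu.continuous.continuousOn)
      (fun s hs => Or.inl (h1u s hs).ne')
  have hcont : ContinuousOn (fun s => w s * (1 + u s) ^ m) (Set.Icc 0 R) := hwc.mul (hupow m)
  have hpq : p.HolderConjugate (p / (p - 1)) := Real.HolderConjugate.conjExponent hp
  have hq0 : 0 < p / (p - 1) := hpq.symm.pos
  have hmem : ∀ᵐ s ∂(volume.restrict (Set.Ioc 0 R)), s ∈ Set.Icc (0:ℝ) R := by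
    filter_upwards [ae_restrict_mem measurableSet_Ioc] with x hx
    exact Set.Ioc_subset_Icc_self hx
  have holder := integral_mul_le_Lp_mul_Lq_of_nonneg (μ := volume.restrict (Set.Ioc 0 R)) hpq
    (f := fun s => w s ^ (1 / p) * (1 + u s) ^ m) (g := fun s => w s ^ (1 / (p / (p - 1))))
    (by filter_upwards [hmem] with s hs
        exact mul_nonneg (rpow_nonneg (hw0 s hs) _) (rpow_nonneg (h1u s hs).le _))
    (by filter_upwards [hmem] with s hs
        exact rpow_nonneg (hw0 s hs) _)
    (memLp_aux ((hwc.rpow_const (fun s _ => Or.inr (by positivity))).mul (hupow m)) _)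
    (memLp_aux (hwc.rpow_const (fun s _ => Or.inr (by positivity))) _)
  have e1 : ∫ s in Set.Ioc 0 R, (w s ^ (1 / p) * (1 + u s) ^ m) * w s ^ (1 / (p / (p - 1)))
      = ∫ s in Set.Ioc 0 R, w s * (1 + u s) ^ m := by
    refine setIntegral_congr_fun measurableSet_Ioc fun s hs => ?_
    have hs' := Set.Ioc_subset_Icc_self hs
    have : w s ^ (1 / p) * w s ^ (1 / (p / (p - 1))) = w s := by
      rw [← rpow_add_of_nonneg (hw0 s hs') (by positivity) (by positivity)]
      rw [one_div, one_div, hpq.inv_add_inv_eq_one, rpow_one]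
    calc _ = (w s ^ (1 / p) * w s ^ (1 / (p / (p - 1)))) * (1 + u s) ^ m := by ring
      _ = _ := by rw [this]
  have e2 : ∫ s in Set.Ioc 0 R, (w s ^ (1 / p) * (1 + u s) ^ m) ^ p
      = ∫ s in Set.Ioc 0 R, w s * (1 + u s) ^ (m * p) := by
    refine setIntegral_congr_fun measurableSet_Ioc fun s hs => ?_
    have hs' := Set.Ioc_subset_Icc_self hs
    rw [mul_rpow (rpow_nonneg (hw0 s hs') _) (rpow_nonneg (h1u s hs').le _),
      ← rpow_mul (hw0 s hs'), ← rpow_mul (h1u s hs').le, one_div_mul_cancel hp0.ne', rpow_one]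
  have e3 : ∫ s in Set.Ioc 0 R, (w s ^ (1 / (p / (p - 1)))) ^ (p / (p - 1))
      = ∫ s in Set.Ioc 0 R, w s := by
    refine setIntegral_congr_fun measurableSet_Ioc fun s hs => ?_
    have hs' := Set.Ioc_subset_Icc_self hs
    rw [← rpow_mul (hw0 s hs'), one_div_mul_cancel hq0.ne', rpow_one]
  rw [e1, e2, e3, one_div_div] at holder
  simp only [← intervalIntegral.integral_of_le hR.le] at holder
  have hmono : ∫ s in (0:ℝ)..c, w s * (1 + u s) ^ m ≤ ∫ s in (0:ℝ)..R, w s * (1 + u s) ^ m := by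
    refine intervalIntegral.integral_mono_interval le_rfl hcR.1.le hcR.2.le ?_
      (hcont.intervalIntegrable_of_Icc hR.le)
    filter_upwards [hmem] with s hs
    exact mul_nonneg (hw0 s hs) (rpow_nonneg (h1u s hs).le _)
  have hfin := hmono.trans holder
  have hψc := hψpos c hcR
  have hinv : exp (-(a c)) * ψ c ^ ((1:ℤ) - (N:ℤ)) * (exp (a c) * ψ c ^ (N - 1)) = 1 := by
    have h1 : ψ c ^ ((1:ℤ) - (N:ℤ)) * ψ c ^ (N - 1) = 1 := by
      rw [← zpow_natCast, ← zpow_add₀ hψc.ne', Nat.cast_sub hN]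
      simp
    have h2 : exp (-(a c)) * exp (a c) = 1 := by rw [← exp_add]; simp
    calc _ = (exp (-(a c)) * exp (a c)) * (ψ c ^ ((1:ℤ) - (N:ℤ)) * ψ c ^ (N - 1)) := by ring
      _ = 1 := by rw [h1, h2, one_mul]
  have hK : 0 ≤ lam * r * (exp (-(a c)) * ψ c ^ ((1:ℤ) - (N:ℤ))) := by
    have := hr.1
    positivity
  have hE := heq c hcR
  calc u 0 - u r = lam * r * (exp (-(a c)) * ψ c ^ ((1:ℤ) - (N:ℤ))) *
        ∫ s in (0:ℝ)..c, w s * (1 + u s) ^ m := by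
        rw [hslope]
        linear_combination (-r * (exp (-(a c)) * ψ c ^ ((1:ℤ) - (N:ℤ)))) * hE +
          r * deriv u c * hinv
    _ ≤ _ := mul_le_mul_of_nonneg_left hfin hK
    _ = _ := by ring
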